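/- The sequence of correlation gaps of the series example converges: lim_{n → ∞} (1 + (n−1)/2) / (n·(1 − (1 − 1/n)^n)) = (1/2) · e/(e − 1) ≈ 0.791, where e is Euler's number. -/

import Mathlib

open scoped BigOperators

namespace CorrIM

variable {V : Type*} [Fintype V] [DecidableEq V]

/-- A node `i` is influenced: `i ∈ S`, or `i` is reachable from some node of `S`
along the live edges of the scenario `c`. -/
def influenced (c : Finset (V × V)) (S : Finset V) (i : V) : Prop :=
  ∃ s ∈ S, Relation.ReflTransGen (fun a b : V => (a, b) ∈ c) s i

/-- `R c S` : the number of influenced nodes in scenario `c` with seed set `S`. -/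
noncomputable def R (c : Finset (V × V)) (S : Finset V) : ℕ :=
  Set.ncard {i : V | influenced c S i}

/-- The Fréchet class `Θ` : probability distributions on scenarios (subsets of `E`)
whose marginals agree with the edge likelihoods `p`. -/
def memTheta (E : Finset (V × V)) (p : V × V → ℝ) (θ : Finset (V × V) → ℝ) : Prop :=
  (∀ c, 0 ≤ θ c) ∧ (∀ c, θ c ≠ 0 → c ⊆ E) ∧ (∑ c : Finset (V × V), θ c) = 1 ∧
    ∀ e ∈ E, (∑ c : Finset (V × V), if e ∈ c then θ c else 0) = p e

/-- Expected number of influenced nodes under the distribution `θ`. -/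
noncomputable def expInf (θ : Finset (V × V) → ℝ) (S : Finset V) : ℝ :=
  ∑ c : Finset (V × V), θ c * (R c S : ℝ)

/-- The correlation robust influence function `f^corr`. -/
noncomputable def fcorr (E : Finset (V × V)) (p : V × V → ℝ) (S : Finset V) : ℝ :=
  sInf {x : ℝ | ∃ θ, memTheta E p θ ∧ x = expInf θ S}

open Classical in
/-- Probability of the event `A` under the distribution `θ`. -/
noncomputable def prob (θ : Finset (V × V) → ℝ) (A : Finset (V × V) → Prop) : ℝ :=
  ∑ c : Finset (V × V), if A c then θ c else 0

/-- `γ` (a list of nodes `i₀, i₁, …, i_λ`, `λ ≥ 1`) is a directed path from the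
seed set `S` to the node `i` using edges of `E`. -/
def IsPathFrom (E : Finset (V × V)) (S : Finset V) (i : V) (γ : List V) : Prop :=
  2 ≤ γ.length ∧ (∃ s ∈ S, γ.head? = some s) ∧ γ.getLast? = some i ∧
    γ.Chain' (fun a b : V => (a, b) ∈ E)

/-- The list of edges `(i₀,i₁), …, (i_{λ-1}, i_λ)` of a path `γ = [i₀, …, i_λ]`. -/
def pathEdges (γ : List V) : List (V × V) := γ.zip γ.tail

/-- The weight `L(γ) = 1 - ∑_{l=1}^{λ} (1 - p(i_{l-1}, i_l))` of a path. -/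
noncomputable def L (p : V × V → ℝ) (γ : List V) : ℝ :=
  1 - ((pathEdges γ).map (fun e => 1 - p e)).sum

/-- `π*_i = max(0, max_{γ ∈ Γ(S,i)} L(γ))`, with value `0` when `Γ(S,i) = ∅`. -/
noncomputable def piStar (E : Finset (V × V)) (p : V × V → ℝ) (S : Finset V) (i : V) : ℝ :=
  sSup (insert 0 {x : ℝ | ∃ γ : List V, IsPathFrom E S i γ ∧ x = L p γ})

/-- The independent cascade distribution `θ_ic` : each edge of `E` is live
independently with probability `p e`. -/
noncomputable def thetaIC (E : Finset (V × V)) (p : V × V → ℝ) (c : Finset (V × V)) : ℝ :=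
  if c ⊆ E then (∏ e ∈ c, p e) * ∏ e ∈ E \ c, (1 - p e) else 0

/-- The independent cascade influence function `f^ic`. -/
noncomputable def fic (E : Finset (V × V)) (p : V × V → ℝ) (S : Finset V) : ℝ :=
  expInf (thetaIC E p) S


/-- the correlation gaps of the series example converge:
`lim_{n → ∞} (1 + (n-1)/2) / (n (1 - (1 - 1/n)^n)) = (1/2) ⬝ e/(e-1)`. -/
theorem series_correlation_gap_limit :
    Filter.Tendsto
      (fun n : ℕ => (1 + ((n : ℝ) - 1) / 2) / ((n : ℝ) * (1 - (1 - 1 / (n : ℝ)) ^ n)))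
      Filter.atTop (nhds (1 / 2 * (Real.exp 1 / (Real.exp 1 - 1)))) := by
  have h1 : Filter.Tendsto (fun n : ℕ => (1 - 1 / (n : ℝ)) ^ n) Filter.atTop
      (nhds (Real.exp (-1))) := by
    refine (Real.tendsto_one_add_div_pow_exp (-1)).congr fun n => ?_
    rw [neg_div, ← sub_eq_add_neg]
  have h2 : Filter.Tendsto (fun n : ℕ => 1 / 2 + 1 / 2 * (1 / (n : ℝ))) Filter.atTop
      (nhds (1 / 2 + 1 / 2 * 0)) :=
    (tendsto_one_div_atTop_nhds_zero_nat.const_mul (1 / 2 : ℝ)).const_add (1 / 2 : ℝ)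
  have he : (1 : ℝ) < Real.exp 1 := Real.one_lt_exp_iff.mpr one_pos
  have hne : (1 : ℝ) - Real.exp (-1) ≠ 0 := by
    have : Real.exp (-1) < 1 := by rw [Real.exp_lt_one_iff]; norm_num
    linarith
  have h3 := h2.div (h1.const_sub 1) hne
  have hlim : (1 / 2 + 1 / 2 * 0) / (1 - Real.exp (-1))
      = 1 / 2 * (Real.exp 1 / (Real.exp 1 - 1)) := by
    have h0 : Real.exp 1 ≠ 0 := Real.exp_ne_zero 1
    have h4 : Real.exp 1 - 1 ≠ 0 := by linarith
    have h5 : 1 - Real.exp (-1) = (Real.exp 1 - 1) / Real.exp 1 := by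
      rw [Real.exp_neg]
      field_simp
    rw [h5]
    field_simp
    ring
  rw [hlim] at h3
  refine h3.congr' ?_
  filter_upwards [Filter.eventually_gt_atTop 0] with n hn
  have hn' : (n : ℝ) ≠ 0 := by positivity
  rw [← div_div]
  simp only [Pi.div_apply]
  congr 1
  field_simp
  ring

end CorrIM
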